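/- Let n be a positive integer, let G be a subgroup of the group 𝕊_n of n×n permutation matrices, and let K/F be a finite Galois extension with Gal(K/F) identified with G. Let α ∈ K be a normal element for K/F, and for i = 1,…,n set y_i = Σ_{g ∈ G} g(α x_i) = Σ_{g ∈ G} g(α)·x_{ρ_g(i)} ∈ K[x_1,…,x_n]. Then the ring of G-invariants of the Laurent polynomial ring K[x_1^{±1},…,x_n^{±1}] equals F[y_1,…,y_n] localized at the multiplicative set generated by x_1⋯x_n; that is, K[x_1^{±1},…,x_n^{±1}]^G = F[y_1,…,y_n]_{x_1⋯x_n} (note that x_1⋯x_n is G-invariant and K[x_1,…,x_n] = K[y_1,…,y_n]). -/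

import Mathlib

set_option maxHeartbeats 1000000
set_option synthInstance.maxHeartbeats 1000000

/-- The canonical embedding of `K` into the rational function field
`K(x₁, …, xₙ) = Frac(K[x₁, …, xₙ])`. -/
noncomputable def ratFuncιK (n : ℕ) (K : Type*) [Field K] :
    K →+* FractionRing (MvPolynomial (Fin n) K) :=
  (algebraMap (MvPolynomial (Fin n) K) (FractionRing (MvPolynomial (Fin n) K))).comp
    MvPolynomial.C

/-- The variable `xᵢ`, viewed as an element of the rational function field
`K(x₁, …, xₙ) = Frac(K[x₁, …, xₙ])`. -/
noncomputable def ratFuncX (n : ℕ) (K : Type*) [Field K] (i : Fin n) :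
    FractionRing (MvPolynomial (Fin n) K) :=
  algebraMap (MvPolynomial (Fin n) K) (FractionRing (MvPolynomial (Fin n) K))
    (MvPolynomial.X i)

/-- `α ∈ K` is a normal element of the finite Galois extension `K/F` if its Galois conjugates
`{g α : g ∈ Gal(K/F)}` form an `F`-basis of `K`. -/
def IsNormalElement (F : Type*) {K : Type*} [Field F] [Field K] [Algebra F K] (α : K) : Prop :=
  LinearIndependent F (fun g : K ≃ₐ[F] K => g α) ∧
    Submodule.span F (Set.range fun g : K ≃ₐ[F] K => g α) = ⊤

/-!
Write `y i = ∑ g, g • (α x i)`. Both rings become the same Laurent polynomial ring after extending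
scalars to `K`, and Galois descent then recovers the smaller one as the ring of invariants.

*The `y i` and the `x i` have the same `K`-span.* For any vector `v` of a `K`-space with a
semilinear action, the traces `∑ g, g • (c v)`, `c ∈ K`, span a subspace containing `v`: a linear
form `f` that vanishes on all of them gives the relation `∑ g, f (g • v) g(c) = 0` between
automorphisms of `K`, so `f (g • v) = 0` for all `g` by Dedekind's independence theorem. Since the
conjugates of `α` span `K` over `F`, these traces for `v = x i` are `F`-combinations of the `y j`.

*Descent.* Let `S` be an `F`-space of invariants and choose `c ∈ K` of trace `1`. The map
`z ↦ ∑ g, g • (c z)` sends the `K`-span of `S` into `S` and fixes every invariant vector.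
-/

section FiniteGroupAction

variable {G : Type*} [Group G] [Fintype G]

theorem smul_sum_smul_self {V : Type*} [AddCommMonoid V] [DistribMulAction G V] (h : G) (v : V) :
    h • ∑ g : G, g • v = ∑ g : G, g • v := by
  simp only [Finset.smul_sum, smul_smul]
  exact Equiv.sum_comp (Equiv.mulLeft h) fun g => g • v

theorem algebraMap_trace_eq_sum_smul (F : Type*) {K : Type*} [Field F] [Field K] [Algebra F K]
    [MulSemiringAction G K] [IsGaloisGroup G F K] (c : K) :
    algebraMap F K (Algebra.trace F K c) = ∑ g : G, g • c := by
  have : FiniteDimensional F K := IsGaloisGroup.finiteDimensional G F K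
  have : IsGalois F K := IsGaloisGroup.isGalois G F K
  rw [trace_eq_sum_automorphisms]
  exact (Fintype.sum_equiv (IsGaloisGroup.mulEquivAlgEquiv G F K).toEquiv _ _ fun _ => rfl).symm

end FiniteGroupAction

theorem linearIndependent_smul_of_faithfulSMul (G K : Type*) [Monoid G] [CommRing K] [IsDomain K]
    [MulSemiringAction G K] [FaithfulSMul G K] :
    LinearIndependent K fun (g : G) (c : K) => g • c :=
  (linearIndependent_monoidHom K K).comp
    (fun g : G => (MulSemiringAction.toRingHom G K g : K →* K))
    fun _ _ hgh => FaithfulSMul.eq_of_smul_eq_smul fun c => DFunLike.congr_fun hgh c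

theorem smulCommClass_of_smulDistribClass (G F K V : Type*) [Monoid G] [Monoid K] [SMul F K]
    [MulDistribMulAction G K] [SMulCommClass G F K] [MulAction K V] [SMul F V]
    [IsScalarTower F K V] [SMul G V] [SMulDistribClass G K V] : SMulCommClass G F V where
  smul_comm g a v := by
    rw [← smul_one_smul K a v, smul_distrib_smul, smul_comm g a (1 : K), smul_one, smul_one_smul]

theorem sum_smul_smul_mem_span_of_mem_span {G F K V : Type*} [Group G] [Fintype G]
    [CommSemiring F] [Semiring K] [Algebra F K] [MulSemiringAction G K] [SMulCommClass G F K]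
    [AddCommMonoid V] [Module F V] [Module K V] [IsScalarTower F K V] [DistribMulAction G V]
    [SMulDistribClass G K V] {α c : K}
    (hc : c ∈ Submodule.span F (Set.range fun g : G => g • α)) (v : V) :
    ∑ g : G, g • c • v ∈ Submodule.span F (Set.range fun h : G => ∑ g : G, g • α • h • v) := by
  induction hc using Submodule.span_induction with
  | mem c hc =>
    obtain ⟨h, rfl⟩ := hc
    refine Submodule.subset_span ⟨h⁻¹, ?_⟩
    calc ∑ g : G, g • α • h⁻¹ • v
        = ∑ g : G, (g * h) • α • h⁻¹ • v :=
          (Equiv.sum_comp (Equiv.mulRight h) fun g => g • α • h⁻¹ • v).symm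
      _ = ∑ g : G, g • (h • α) • v := by
          simp only [mul_smul, smul_distrib_smul h, smul_inv_smul]
  | zero => simp
  | add c d _ _ hc hd =>
    simpa only [add_smul, smul_add, Finset.sum_add_distrib] using add_mem hc hd
  | smul a c _ hc =>
    have : SMulCommClass G F V := smulCommClass_of_smulDistribClass G F K V
    simpa only [smul_assoc, smul_comm _ a, ← Finset.smul_sum] using Submodule.smul_mem _ a hc

section SemilinearAction

variable {G K V : Type*} [Group G] [Fintype G] [Field K] [MulSemiringAction G K]
  [AddCommGroup V] [Module K V] [DistribMulAction G V] [SMulDistribClass G K V]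

theorem mem_span_range_sum_smul_smul [FaithfulSMul G K] (v : V) :
    v ∈ Submodule.span K (Set.range fun c : K => ∑ g : G, g • c • v) := by
  by_contra hv
  obtain ⟨f, hfv, hf⟩ := Submodule.exists_le_ker_of_notMem hv
  have trace_relation (c : K) : ∑ g : G, f (g • v) * (g • c) = 0 := by
    have : f (∑ g : G, g • c • v) = 0 := hf (Submodule.subset_span ⟨c, rfl⟩)
    simpa only [map_sum, smul_distrib_smul, map_smul, smul_eq_mul, mul_comm] using this
  have coeff_eq_zero := Fintype.linearIndependent_iff.mp
    (linearIndependent_smul_of_faithfulSMul G K) (fun g => f (g • v))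
    (funext fun c => by simpa using trace_relation c)
  exact hfv (by simpa using coeff_eq_zero 1)

theorem span_range_sum_smul_smul_eq_span_range {F : Type*} [CommSemiring F] [Algebra F K]
    [SMulCommClass G F K] [FaithfulSMul G K] {ι : Type*} [MulAction G ι] {α : K}
    (hα : Submodule.span F (Set.range fun g : G => g • α) = ⊤)
    {x : ι → V} (hx : ∀ (g : G) (i : ι), g • x i = x (g • i)) :
    Submodule.span K (Set.range fun i => ∑ g : G, g • α • x i) =
      Submodule.span K (Set.range x) := by
  apply le_antisymm <;> rw [Submodule.span_le] <;> rintro _ ⟨i, rfl⟩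
  · refine sum_mem fun g _ => ?_
    rw [smul_distrib_smul, hx]
    exact Submodule.smul_mem _ _ (Submodule.subset_span ⟨g • i, rfl⟩)
  · let : Module F V := Module.compHom V (algebraMap F K)
    have : IsScalarTower F K V := .of_compHom F K V
    refine Submodule.span_le.mpr ?_ (mem_span_range_sum_smul_smul (G := G) (x i))
    rintro _ ⟨c, rfl⟩
    refine Submodule.span_subset_span F K _ (Submodule.span_mono ?_
      (sum_smul_smul_mem_span_of_mem_span (hα ▸ Submodule.mem_top : c ∈ _) (x i)))
    rintro _ ⟨h, rfl⟩
    exact ⟨h • i, by simp only [hx]⟩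

variable (F : Type*) [Field F] [Algebra F K] [IsGaloisGroup G F K] [Module F V]
  [IsScalarTower F K V]

theorem sum_smul_smul_eq_trace_smul {v : V} (hv : v ∈ MulAction.fixedPoints G V) (c : K) :
    ∑ g : G, g • c • v = Algebra.trace F K c • v := by
  simp only [smul_distrib_smul, hv _, ← Finset.sum_smul, ← algebraMap_trace_eq_sum_smul F,
    algebraMap_smul]

theorem sum_smul_smul_mem_of_mem_span {S : Submodule F V}
    (hS : (S : Set V) ⊆ MulAction.fixedPoints G V) {z : V}
    (hz : z ∈ Submodule.span K (S : Set V)) (c : K) : ∑ g : G, g • c • z ∈ S := by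
  induction hz using Submodule.span_induction generalizing c with
  | mem s hs =>
    rw [sum_smul_smul_eq_trace_smul F (hS hs)]
    exact S.smul_mem _ hs
  | zero => simp
  | add v w _ _ hv hw =>
    simpa only [smul_add, Finset.sum_add_distrib] using S.add_mem (hv c) (hw c)
  | smul a v _ hv => simpa only [smul_smul] using hv (c * a)

end SemilinearAction

theorem span_inter_fixedPoints_eq {G F K V : Type*} [Group G] [Finite G] [Field F] [Field K]
    [Algebra F K] [MulSemiringAction G K] [IsGaloisGroup G F K] [AddCommGroup V] [Module F V]
    [Module K V] [IsScalarTower F K V] [DistribMulAction G V] [SMulDistribClass G K V]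
    {S : Submodule F V} (hS : (S : Set V) ⊆ MulAction.fixedPoints G V) :
    (Submodule.span K (S : Set V) : Set V) ∩ MulAction.fixedPoints G V = S := by
  have := Fintype.ofFinite G
  have : FiniteDimensional F K := IsGaloisGroup.finiteDimensional G F K
  have : IsGalois F K := IsGaloisGroup.isGalois G F K
  obtain ⟨c, hc⟩ := Algebra.trace_surjective F K 1
  refine Set.Subset.antisymm ?_ fun s hs => ⟨Submodule.subset_span hs, hS hs⟩
  rintro z ⟨hz, hz_fixed⟩
  have trace_smul_mem : Algebra.trace F K c • z ∈ S :=
    sum_smul_smul_eq_trace_smul F hz_fixed c ▸ sum_smul_smul_mem_of_mem_span F hS hz c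
  simpa only [hc, one_smul, SetLike.mem_coe] using trace_smul_mem

theorem adjoin_range_union_inv_prod {R A ι : Type*} [CommSemiring R] [CommSemiring A] [Algebra R A]
    [Fintype ι] (x : ι → Aˣ) :
    Algebra.adjoin R (Set.range (fun i => (x i : A)) ∪ {(↑(∏ i, x i)⁻¹ : A)}) =
      Algebra.adjoin R (Set.range (fun i => (x i : A)) ∪ Set.range fun i => (↑(x i)⁻¹ : A)) := by
  classical
  apply le_antisymm <;> refine Algebra.adjoin_le ?_
  · rintro _ (hx | rfl)
    · exact Algebra.subset_adjoin (Or.inl hx)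
    · rw [← Finset.prod_inv_distrib, Units.coe_prod]
      exact prod_mem fun i _ => Algebra.subset_adjoin (Or.inr ⟨i, rfl⟩)
  · rintro _ (hx | ⟨i, rfl⟩)
    · exact Algebra.subset_adjoin (Or.inl hx)
    · have inv_eq : (x i)⁻¹ = (∏ j, x j)⁻¹ * ∏ j ∈ Finset.univ.erase i, x j := by
        rw [← Finset.mul_prod_erase _ x (Finset.mem_univ i), mul_inv, inv_mul_cancel_right]
      simp only [inv_eq, Units.val_mul, Units.coe_prod]
      exact mul_mem (Algebra.subset_adjoin (Or.inr rfl))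
        (prod_mem fun j _ => Algebra.subset_adjoin (Or.inl ⟨j, rfl⟩))

section SemilinearAlgebraAction

variable {G : Type*} [Group G]

theorem units_inv_mem_fixedPoints {A : Type*} [Monoid A] [MulDistribMulAction G A] {u : Aˣ}
    (hu : (u : A) ∈ MulAction.fixedPoints G A) : (↑u⁻¹ : A) ∈ MulAction.fixedPoints G A :=
  fun g => Units.eq_inv_of_mul_eq_one_left <| by
    rw [← hu g, ← smul_mul', u.mul_inv, smul_one]

theorem prod_mem_fixedPoints {A ι : Type*} [CommMonoid A] [MulDistribMulAction G A] [Fintype ι]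
    [MulAction G ι] {x : ι → A} (hx : ∀ (g : G) (i : ι), g • x i = x (g • i)) :
    ∏ i, x i ∈ MulAction.fixedPoints G A := fun g => by
  simp only [Finset.smul_prod', hx]
  exact Equiv.prod_comp (MulAction.toPerm g) x

variable {F K L : Type*} [Field F] [Field K] [Algebra F K]

theorem adjoin_inter_fixedPoints_eq_adjoin [Finite G] [MulSemiringAction G K]
    [IsGaloisGroup G F K] [CommRing L] [Algebra F L] [Algebra K L] [IsScalarTower F K L]
    [MulSemiringAction G L] [SMulDistribClass G K L] {s : Set L}
    (hs : s ⊆ MulAction.fixedPoints G L) :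
    (Algebra.adjoin K s : Set L) ∩ MulAction.fixedPoints G L = Algebra.adjoin F s := by
  have : SMulCommClass G F L := smulCommClass_of_smulDistribClass G F K L
  have adjoin_le_fixed : Algebra.adjoin F s ≤ FixedPoints.subalgebra F L G := Algebra.adjoin_le hs
  rw [← Algebra.adjoin_adjoin_of_tower F, ← Subalgebra.coe_toSubmodule,
    Subalgebra.adjoin_eq_span_of_eq_span K _ (Submodule.span_eq _).symm]
  exact span_inter_fixedPoints_eq adjoin_le_fixed

variable [Fintype G] {ι : Type*} [Fintype ι] [MulAction G ι]

theorem adjoin_units_inter_fixedPoints_eq_adjoin [MulSemiringAction G K]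
    [IsGaloisGroup G F K] [CommRing L] [Algebra F L] [Algebra K L] [IsScalarTower F K L]
    [MulSemiringAction G L] [SMulDistribClass G K L] {α : K}
    (hα : Submodule.span F (Set.range fun g : G => g • α) = ⊤)
    {x : ι → Lˣ} (hx : ∀ (g : G) (i : ι), g • (x i : L) = x (g • i)) :
    (Algebra.adjoin K (Set.range (fun i => (x i : L)) ∪ Set.range fun i => (↑(x i)⁻¹ : L)) :
        Set L) ∩ MulAction.fixedPoints G L =
      Algebra.adjoin F (Set.range (fun i => ∑ g : G, g • α • (x i : L)) ∪
        {(↑(∏ i, x i)⁻¹ : L)}) := by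
  have : FaithfulSMul G K := IsGaloisGroup.faithful F
  have inv_prod_fixed : (↑(∏ i, x i)⁻¹ : L) ∈ MulAction.fixedPoints G L :=
    units_inv_mem_fixedPoints (by simpa only [Units.coe_prod] using prod_mem_fixedPoints hx)
  rw [← adjoin_range_union_inv_prod, Algebra.adjoin_union, ← Algebra.adjoin_span,
    ← span_range_sum_smul_smul_eq_span_range hα hx, Algebra.adjoin_span, ← Algebra.adjoin_union]
  refine adjoin_inter_fixedPoints_eq_adjoin <|
    Set.union_subset ?_ (Set.singleton_subset_iff.mpr inv_prod_fixed)
  rintro _ ⟨i, rfl⟩ h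
  exact smul_sum_smul_self h _

theorem laurent_invariants_eq_localized_polynomial_ring_general [IsGalois F K] [CommRing L]
    [Algebra K L] [MulSemiringAction G L] (e : G ≃* (K ≃ₐ[F] K)) {α : K} (hα : IsNormalElement F α)
    (hactK : ∀ (g : G) (a : K), g • algebraMap K L a = algebraMap K L (e g a))
    (x : ι → Lˣ) (hactX : ∀ (g : G) (i : ι), g • (x i : L) = x (g • i))
    (y : ι → L) (hy : ∀ i, y i = ∑ g : G, algebraMap K L (e g α) * x (g • i)) :
    {z : L | z ∈ Subring.closure (Set.range (algebraMap K L) ∪ Set.range (fun i => (x i : L)) ∪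
        Set.range (fun i => (↑(x i)⁻¹ : L))) ∧ ∀ g : G, g • z = z} =
      (Subring.closure (Set.range ((algebraMap K L).comp (algebraMap F K)) ∪ Set.range y ∪
        {(↑(∏ i, x i)⁻¹ : L)}) : Set L) := by
  let : MulSemiringAction G K := .compHom K (e : G →* (K ≃ₐ[F] K))
  let : Algebra F L := Algebra.compHom L (algebraMap F K)
  have : IsScalarTower F K L := .of_algebraMap_eq fun _ => rfl
  have : IsGaloisGroup G F K := .of_mulEquiv_algEquiv e fun _ _ => rfl
  have : SMulDistribClass G K L := ⟨fun g a z => by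
    rw [Algebra.smul_def, smul_mul', hactK, ← Algebra.smul_def]; rfl⟩
  have hα_span : Submodule.span F (Set.range fun g : G => g • α) = ⊤ :=
    (congrArg (Submodule.span F) (e.surjective.range_comp fun σ => σ α)).trans hα.2
  have hy_trace : y = fun i => ∑ g : G, g • α • (x i : L) := funext fun i => by
    simp only [hy, Algebra.smul_def, smul_mul', hactK, hactX]
  have invariants_eq_adjoin := adjoin_units_inter_fixedPoints_eq_adjoin hα_span hactX
  rw [← hy_trace, ← Subalgebra.coe_toSubring, ← Subalgebra.coe_toSubring,
    Algebra.adjoin_eq_ring_closure, Algebra.adjoin_eq_ring_closure, ← Set.union_assoc,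
    ← Set.union_assoc] at invariants_eq_adjoin
  exact invariants_eq_adjoin

end SemilinearAlgebraAction

theorem ratFuncιK_eq_algebraMap (n : ℕ) (K : Type*) [Field K] :
    ratFuncιK n K = algebraMap K (FractionRing (MvPolynomial (Fin n) K)) :=
  (IsScalarTower.algebraMap_eq K (MvPolynomial (Fin n) K) _).symm

theorem ratFuncX_ne_zero (n : ℕ) (K : Type*) [Field K] (i : Fin n) : ratFuncX n K i ≠ 0 := by
  simp [ratFuncX]

/-- **Multiplicative invariants of a quasi-split torus.**  Let `G` be a subgroup of the group
`𝕊_n ≅ S_n` of `n × n` permutation matrices, let `K/F` be a finite Galois extension with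
Galois group identified with `G` via `e : G ≃* Gal(K/F)`, and let `α ∈ K` be a normal element
for `K/F`.  Let `G` act on `K(x₁, …, xₙ)` through the Galois action on `K` and by
`g(xᵢ) = x_{ρ_g(i)}`, and set `yᵢ = ∑_{g ∈ G} g(α)·x_{ρ_g(i)}`.  Then the ring of
`G`-invariants of the Laurent polynomial ring `K[x₁^{±1}, …, xₙ^{±1}]` (realized as the
subring of `K(x₁, …, xₙ)` generated by `K`, the `xᵢ` and the `xᵢ⁻¹`) equals
`F[y₁, …, yₙ]_{x₁⋯xₙ}`, the subring generated by `F`, the `yᵢ`, and `(x₁⋯xₙ)⁻¹`. -/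
theorem laurent_invariants_eq_localized_polynomial_ring
    (n : ℕ) (hn : 0 < n) (G : Subgroup (Equiv.Perm (Fin n))) [Fintype G]
    (F K : Type*) [Field F] [Field K] [Algebra F K] [FiniteDimensional F K] [IsGalois F K]
    (e : G ≃* (K ≃ₐ[F] K)) (α : K) (hα : IsNormalElement F α)
    [MulSemiringAction G (FractionRing (MvPolynomial (Fin n) K))]
    (hactK : ∀ (g : G) (a : K), g • ratFuncιK n K a = ratFuncιK n K ((e g) a))
    (hactX : ∀ (g : G) (i : Fin n),
      g • ratFuncX n K i = ratFuncX n K ((g : Equiv.Perm (Fin n)) i))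
    (y : Fin n → FractionRing (MvPolynomial (Fin n) K))
    (hy : ∀ i : Fin n, y i = ∑ g : G,
      ratFuncιK n K ((e g) α) * ratFuncX n K ((g : Equiv.Perm (Fin n)) i)) :
    {z : FractionRing (MvPolynomial (Fin n) K) |
        z ∈ Subring.closure (Set.range (ratFuncιK n K) ∪ Set.range (ratFuncX n K) ∪
          Set.range (fun i => (ratFuncX n K i)⁻¹)) ∧ ∀ g : G, g • z = z} =
      (Subring.closure (Set.range ((ratFuncιK n K).comp (algebraMap F K)) ∪ Set.range y ∪
        {(∏ i : Fin n, ratFuncX n K i)⁻¹}) : Set (FractionRing (MvPolynomial (Fin n) K))) := by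
  simp only [ratFuncιK_eq_algebraMap] at hactK hy ⊢
  simpa using laurent_invariants_eq_localized_polynomial_ring_general e hα hactK
    (fun i => Units.mk0 _ (ratFuncX_ne_zero n K i)) hactX y hy
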